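/- Let R be a commutative ring, f₁,…,fₙ ∈ R a regular sequence, and fix k with 1 ≤ k ≤ n. Let B = R[X_r : r ∈ {1,…,n}, r ≠ k] be the polynomial ring in n−1 variables, and regard B as an algebra over the polynomial ring Q = ℤ[S_r : r ≠ k] via S_r ↦ f_k·X_r − f_r. Then Torᵢ^Q(B, Q/(S_r : r ≠ k)) = 0 for every i > 0; that is, the sequence (f_k·X_r − f_r)_{r ≠ k} is Koszul-regular in B. (These are the defining relations of the k-th chart of the blow-up of Spec R in the regularly immersed subscheme V(f₁,…,fₙ).) -/

import Mathlib

open CategoryTheory CategoryTheory.Limits MvPolynomial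

section KoszulRegularity

open TensorProduct RingTheory.Sequence
open scoped Pointwise

lemma MvPolynomial.isWeaklyRegular_map_X {σ R : Type*} [CommRing R] {l : List σ}
    (hl : l.Nodup) :
    IsWeaklyRegular (MvPolynomial σ R) (l.map (X : σ → MvPolynomial σ R)) := by
  refine ⟨fun i hi ↦ ?_⟩
  have hi' : i < l.length := by simpa using hi
  rw [isSMulRegular_iff_right_eq_zero_of_smul]
  intro p hp
  obtain ⟨p, rfl⟩ := Submodule.Quotient.mk_surjective _ p
  rw [← Submodule.Quotient.mk_smul, Submodule.Quotient.mk_eq_zero] at hp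
  rw [Submodule.Quotient.mk_eq_zero]
  have hspan : Ideal.ofList ((l.map (X : σ → MvPolynomial σ R)).take i) =
      Ideal.span (X '' {j | j ∈ l.take i}) := by
    rw [Ideal.ofList, ← List.map_take]
    congr 1
    ext; simp only [List.mem_map, Set.mem_ofPred_eq, Set.mem_image]
  simp only [smul_eq_mul, Ideal.mul_top, hspan, mem_ideal_span_X_image, List.getElem_map] at hp ⊢
  intro m hm
  obtain ⟨j, hj, hmj⟩ := hp (m + Finsupp.single l[i] 1)
    (by rw [mem_support_iff, add_comm, coeff_X_mul]; exact mem_support_iff.mp hm)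
  refine ⟨j, hj, ?_⟩
  have : l[i] ≠ j := by
    rintro rfl
    obtain ⟨k, hk, hkeq⟩ := List.mem_take_iff_getElem.mp hj
    have := (hl.getElem_inj_iff).mp hkeq
    omega
  simpa [Finsupp.single_apply, this] using hmj

lemma ModuleCat.hasProjectiveDimensionLT_quotient_of_isWeaklyRegular {R : Type} [CommRing R]
    (M : Type) [AddCommGroup M] [Module R M] (rs : List R) (h : IsWeaklyRegular M rs) (n : ℕ)
    (hM : HasProjectiveDimensionLT (ModuleCat.of R M) n) :
    HasProjectiveDimensionLT
      (ModuleCat.of R (M ⧸ (Ideal.ofList rs • ⊤ : Submodule R M))) (n + rs.length) := by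
  induction rs generalizing M n with
  | nil =>
    exact hasProjectiveDimensionLT_of_iso
      (Submodule.quotEquivOfEqBot _ (by simp)).symm.toModuleIso n
  | cons r rs ih =>
    obtain ⟨hr, h⟩ := (isWeaklyRegular_cons_iff M r rs).mp h
    have hS := IsSMulRegular.smulShortComplex_shortExact (M := ModuleCat.of R M) hr
    have hM' := hasProjectiveDimensionLT_of_ge (ModuleCat.of R M) n (n + 1) (by lia)
    have := ih (QuotSMulTop r M) h (n + 1) (hS.hasProjectiveDimensionLT_X₃ n hM hM')
    rw [List.length_cons, add_comm rs.length, ← add_assoc]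
    exact hasProjectiveDimensionLT_of_iso
      (Submodule.quotOfListConsSMulTopEquivQuotSMulTopInner M r rs).symm.toModuleIso _

section Resolution

variable {R : Type} [CommRing R] {Y : ModuleCat.{0} R} (P : ProjectiveResolution Y)

lemma CategoryTheory.ProjectiveResolution.exists_homotopy_smul {a : R}
    (ha : ∀ y : Y, a • y = 0) :
    ∃ h : ∀ i, P.complex.X i →ₗ[R] P.complex.X (i + 1), ∀ i,
      (P.complex.d (i + 2) (i + 1)).hom ∘ₗ h (i + 1) + h i ∘ₗ (P.complex.d (i + 1) i).hom =
        a • LinearMap.id := by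
  have hY : a • 𝟙 Y = 0 := by
    ext y
    exact ha y
  let H := ProjectiveResolution.liftHomotopyZero (P := P) (Q := P) (a • 𝟙 P.complex) (by
    have : a • P.π = P.π ≫ (ChainComplex.single₀ (ModuleCat R)).map (a • 𝟙 Y) := by
      ext : 1
      simp only [HomologicalComplex.smul_f_apply, HomologicalComplex.comp_f,
        ChainComplex.single₀_map_f_zero]
      ext
      rfl
    rw [Linear.smul_comp, Category.id_comp, this, hY, Functor.map_zero, comp_zero])
  refine ⟨fun i ↦ (H.hom i (i + 1)).hom, fun i ↦ ?_⟩
  have := H.comm (i + 1)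
  rw [dNext_eq _ (show (ComplexShape.down ℕ).Rel (i + 1) i from rfl),
    prevD_eq _ (show (ComplexShape.down ℕ).Rel (i + 2) (i + 1) from rfl)] at this
  have := congrArg ModuleCat.Hom.hom this
  simp only [HomologicalComplex.smul_f_apply, HomologicalComplex.id_f, ModuleCat.hom_smul,
    ModuleCat.hom_id, HomologicalComplex.zero_f, add_zero, ModuleCat.hom_add,
    ModuleCat.hom_comp] at this
  exact (add_comm _ _).trans this.symm

lemma CategoryTheory.ProjectiveResolution.exists_contraction {n : ℕ}
    [HasProjectiveDimensionLT Y (n + 1)] {i : ℕ} (hi : n ≤ i) :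
    ∃ (t : P.complex.X i →ₗ[R] P.complex.X (i + 1))
      (u : P.complex.X (i + 1) →ₗ[R] P.complex.X (i + 2)),
      (P.complex.d (i + 2) (i + 1)).hom ∘ₗ u + t ∘ₗ (P.complex.d (i + 1) i).hom =
        LinearMap.id := by
  have hproj (j : ℕ) : Module.Projective R (P.complex.X j) :=
    (IsProjective.iff_projective _).mpr (P.projective j)
  set δ := (P.complex.d (i + 1) i).hom with hδ
  obtain ⟨s, hs⟩ := (P.extMk_eq_zero_iff (Y := ModuleCat.of R (LinearMap.range δ))
    (ModuleCat.ofHom δ.rangeRestrict) (i + 2) rfl (by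
      ext x
      have := congr($(P.complex.d_comp_d (i + 2) (i + 1) i).hom x)
      exact this) i rfl).mp
    ((HasProjectiveDimensionLT.subsingleton Y (n + 1) (i + 1) (by omega) _).elim _ _)
  obtain ⟨t, ht⟩ := Module.projective_lifting_property δ.rangeRestrict s.hom
    δ.surjective_rangeRestrict
  have hδtδ (x) : δ (t (δ x)) = δ x := by
    have h₁ := congr(($ht (δ x)).1)
    have h₂ := congr(($(hs).hom x).1)
    exact h₁.trans h₂
  have hexact : LinearMap.range (P.complex.d (i + 2) (i + 1)).hom = LinearMap.ker δ :=
    ((ShortComplex.moduleCat_exact_iff_range_eq_ker _).mp (P.exact_succ i))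
  let v : P.complex.X (i + 1) →ₗ[R] LinearMap.range (P.complex.d (i + 2) (i + 1)).hom :=
    (LinearMap.id - t ∘ₗ δ).codRestrict _ fun x ↦ by
      rw [hexact, LinearMap.mem_ker]
      simp [hδtδ]
  obtain ⟨u, hu⟩ := Module.projective_lifting_property
    (P.complex.d (i + 2) (i + 1)).hom.rangeRestrict v
    (LinearMap.surjective_rangeRestrict _)
  refine ⟨t, u, LinearMap.ext fun x ↦ ?_⟩
  have : (P.complex.d (i + 2) (i + 1)).hom (u x) = x - t (δ x) := congr(($hu x).1)
  simp [this]

lemma CategoryTheory.ProjectiveResolution.isZero_Tor_succ (M : Type) [AddCommGroup M] [Module R M]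
    (i : ℕ) (h : Function.Exact ((P.complex.d (i + 2) (i + 1)).hom.lTensor M)
      ((P.complex.d (i + 1) i).hom.lTensor M)) :
    IsZero (((Tor (ModuleCat R) (i + 1)).obj (ModuleCat.of R M)).obj Y) := by
  refine IsZero.of_iso ?_ (P.isoLeftDerivedObj _ (i + 1))
  refine (HomologicalComplex.exactAt_iff_isZero_homology _ _).mp ?_
  rw [HomologicalComplex.exactAt_iff' _ (i + 2) (i + 1) i (by simp) (by simp),
    ShortComplex.moduleCat_exact_iff]
  exact fun x hx ↦ (h x).mp hx

end Resolution

section AlgebraicComplex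

variable {B : Type*} [CommRing B] {K : ℕ → Type*} [∀ i, AddCommGroup (K i)]
  [∀ i, Module B (K i)]

/-- The truncated mapping cone of multiplication by `f` on the complex `(K, d)` is acyclic at
`K (i + 2) × K (i + 1)`; its differential is `(x, y) ↦ (d x + f y, - d y)`. -/
def IsConeExactAt (d : ∀ i, K (i + 1) →ₗ[B] K i) (f : B) (i : ℕ) : Prop :=
  ∀ (x : K (i + 2)) (y : K (i + 1)), d (i + 1) x + f • y = 0 → d i y = 0 →
    ∃ (x' : K (i + 3)) (y' : K (i + 2)), d (i + 2) x' + f • y' = x ∧ -d (i + 1) y' = y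

/-- Multiplication by `a` is null-homotopic on the positive part of the complex `(K, d)`. -/
def IsNullHomotopicSMul (d : ∀ i, K (i + 1) →ₗ[B] K i) (a : B) : Prop :=
  ∃ h : ∀ i, K i →ₗ[B] K (i + 1), ∀ i x, d (i + 1) (h (i + 1) x) + h i (d i x) = a • x

variable {d : ∀ i, K (i + 1) →ₗ[B] K i}

lemma IsNullHomotopicSMul.neg {a : B} (ha : IsNullHomotopicSMul d a) :
    IsNullHomotopicSMul d (-a) := by
  obtain ⟨h, hh⟩ := ha
  exact ⟨fun i ↦ -h i, fun i x ↦ by simp [← hh i x, add_comm]⟩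

lemma IsNullHomotopicSMul.zero : IsNullHomotopicSMul d 0 := ⟨fun _ ↦ 0, by simp⟩

lemma IsNullHomotopicSMul.lTensor {a : B} (ha : IsNullHomotopicSMul d a)
    (M : Type*) [AddCommGroup M] [Module B M] :
    IsNullHomotopicSMul (K := fun i ↦ M ⊗[B] K i) (fun i ↦ (d i).lTensor M) a := by
  obtain ⟨h, hh⟩ := ha
  refine ⟨fun i ↦ (h i).lTensor M, fun i x ↦ ?_⟩
  have : d (i + 1) ∘ₗ h (i + 1) + h i ∘ₗ d i = a • LinearMap.id := LinearMap.ext (hh i)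
  have := congr($(congrArg (LinearMap.lTensor M) this) x)
  simpa [LinearMap.lTensor_add, LinearMap.lTensor_comp, LinearMap.lTensor_smul] using this

/-- If `r` acts injectively on `K`, is null-homotopic on the cone of `f`, and `K → K'` is the
reduction modulo `r`, then acyclicity of the cone over `K'` descends to `K` with a degree shift. -/
lemma IsConeExactAt.of_reduction {K' : ℕ → Type*} [∀ i, AddCommGroup (K' i)]
    [∀ i, Module B (K' i)] {d' : ∀ i, K' (i + 1) →ₗ[B] K' i} (hd : ∀ i x, d i (d (i + 1) x) = 0)
    (π : ∀ i, K i →ₗ[B] K' i) (hπd : ∀ i x, π i (d i x) = d' i (π (i + 1) x))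
    (hπ : ∀ i, Function.Surjective (π i)) {r b f : B}
    (hker : ∀ i x, π i x = 0 → ∃ y, x = r • y) (hπr : ∀ i x, π i (r • x) = 0)
    (hr : ∀ i, IsSMulRegular (K i) r) (hnull : IsNullHomotopicSMul d (r - b * f)) {i : ℕ}
    (h : IsConeExactAt d' f (i + 1)) : IsConeExactAt d f i := by
  intro x y hx hy
  obtain ⟨s, hs⟩ := hnull
  have hsx := hs (i + 1) x
  have hsy := hs i y
  have hx' : d (i + 1) x = -(f • y) := eq_neg_of_add_eq_zero_left hx
  simp only [hx', hy, map_neg, map_smul, map_zero, add_zero] at hsx hsy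
  have e₁ : d (i + 2) (s (i + 2) x) + f • (b • x - s (i + 1) y) = r • x := by
    rw [eq_sub_of_add_eq hsx]; module
  have e₂ : -d (i + 1) (b • x - s (i + 1) y) = r • y := by
    rw [map_sub, map_smul, hx', hsy]; module
  obtain ⟨u', v', hu, hv⟩ := h (π _ (s (i + 2) x)) (π _ (b • x - s (i + 1) y))
    (by rw [← hπd, ← map_smul, ← map_add, e₁, hπr])
    (by rw [← hπd, eq_neg_of_add_eq_zero_left (neg_add_eq_zero.mp (by rw [← e₂]; simp) :
          d (i + 1) (b • x - s (i + 1) y) + r • y = 0), map_neg, hπr, neg_zero])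
  obtain ⟨u, rfl⟩ := hπ _ u'
  obtain ⟨v, rfl⟩ := hπ _ v'
  obtain ⟨p, hp⟩ := hker _ (s (i + 2) x - (d (i + 3) u + f • v))
    (by rw [map_sub, map_add, map_smul, hπd, hu, sub_self])
  obtain ⟨q, hq⟩ := hker _ (b • x - s (i + 1) y + d (i + 2) v)
    (by rw [map_add, hπd, ← hv, neg_add_cancel])
  refine ⟨p, q, hr _ ?_, hr _ ?_⟩
  · show r • _ = r • _
    rw [← e₁, smul_add, smul_comm r f, ← map_smul, ← hp, ← hq]
    simp [hd]
  · show r • _ = r • _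
    rw [← e₂, smul_neg, ← map_smul, ← hq]
    simp [hd]

/-- A complex of flat modules whose length is at most that of a weakly regular sequence on `M`
acting null-homotopically on the cone of `f` becomes acyclic after forming the cone over `M`. -/
lemma isConeExactAt_lTensor_of_isWeaklyRegular [∀ i, Module.Flat B (K i)]
    (hd : ∀ i, d i ∘ₗ d (i + 1) = 0) {N : ℕ}
    (hN : ∀ i, N ≤ i → ∃ (t : K i →ₗ[B] K (i + 1)) (u : K (i + 1) →ₗ[B] K (i + 2)),
      d (i + 1) ∘ₗ u + t ∘ₗ d i = LinearMap.id) {f : B} (rs : List B)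
    (hrs : ∀ r ∈ rs, ∃ b, IsNullHomotopicSMul d (r - b * f))
    (M : Type*) [AddCommGroup M] [Module B M] (hM : IsWeaklyRegular M rs) (i : ℕ)
    (hi : N ≤ i + rs.length) :
    IsConeExactAt (K := fun i ↦ M ⊗[B] K i) (fun i ↦ (d i).lTensor M) f i := by
  induction rs generalizing M i with
  | nil =>
    have hexact (j : ℕ) (hj : N ≤ j) (z : M ⊗[B] K (j + 1)) (hz : (d j).lTensor M z = 0) :
        ∃ w, (d (j + 1)).lTensor M w = z := by
      obtain ⟨t, u, htu⟩ := hN j hj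
      have := congr($(congrArg (LinearMap.lTensor M) htu) z)
      rw [LinearMap.lTensor_add, LinearMap.lTensor_comp, LinearMap.lTensor_comp] at this
      exact ⟨u.lTensor M z, by simpa [hz] using this⟩
    intro x y hx hy
    obtain ⟨y', hy'⟩ := hexact i (by simpa using hi) y hy
    obtain ⟨x', hx'⟩ := hexact (i + 1) (by simpa using hi.trans (Nat.le_succ i)) (x + f • y')
      (by simpa [hy'] using hx)
    exact ⟨x', -y', by simp [hx'], by simp [hy']⟩
  | cons r rs ih =>
    obtain ⟨hr, hM⟩ := (isWeaklyRegular_cons_iff M r rs).mp hM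
    obtain ⟨b, hb⟩ := hrs r (by simp)
    have h := ih (fun r' hr' ↦ hrs r' (by simp [hr'])) (QuotSMulTop r M) hM (i + 1)
      (by simp at hi; omega)
    refine h.of_reduction (fun j x ↦ ?_) (fun j ↦ (Submodule.mkQ (r • ⊤)).rTensor (K j)) ?_ ?_
      ?_ ?_ ?_ (hb.lTensor M)
    · rw [← LinearMap.comp_apply, ← LinearMap.lTensor_comp, hd]; simp
    · intro j x
      simp only [← LinearMap.comp_apply, LinearMap.rTensor_comp_lTensor,
        LinearMap.lTensor_comp_rTensor]
    · exact fun j ↦ LinearMap.rTensor_surjective _ (Submodule.mkQ_surjective _)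
    · intro j x hx
      have : Function.Exact (r • LinearMap.id : M →ₗ[B] M)
          (Submodule.mkQ (r • ⊤ : Submodule B M)) := by
        rw [LinearMap.exact_iff, Submodule.ker_mkQ]
        ext m
        simp [Submodule.mem_smul_pointwise_iff_exists]
      obtain ⟨y, hy⟩ := (rTensor_exact (K j) this (Submodule.mkQ_surjective _) x).mp hx
      exact ⟨y, by rw [← hy, LinearMap.rTensor_smul]; simp⟩
    · intro j x
      induction x with
      | zero => simp
      | add x y hx hy => simp only [smul_add, map_add, hx, hy, add_zero]
      | tmul m k =>
        rw [TensorProduct.smul_tmul', LinearMap.rTensor_tmul, Submodule.mkQ_apply,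
          (Submodule.Quotient.mk_eq_zero _).mpr (Submodule.smul_mem_pointwise_smul m r ⊤ trivial),
          TensorProduct.zero_tmul]
    · intro j
      have := Module.Flat.rTensor_preserves_injective_linearMap (M := K j)
        (r • LinearMap.id : M →ₗ[B] M) (fun x y h ↦ hr (by simpa using h))
      rw [LinearMap.rTensor_smul] at this
      exact fun x y h ↦ this (by simpa using h)

/-- Acyclicity criterion for a complex of flat modules of length at most `N`: its homology has no
`f`-torsion because of `rs`, and vanishes away from `f` because of `gs`. -/
lemma exact_of_isWeaklyRegular_of_isLocalization [∀ i, Module.Flat B (K i)]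
    (hd : ∀ i, d i ∘ₗ d (i + 1) = 0) {N : ℕ}
    (hN : ∀ i, N ≤ i → ∃ (t : K i →ₗ[B] K (i + 1)) (u : K (i + 1) →ₗ[B] K (i + 2)),
      d (i + 1) ∘ₗ u + t ∘ₗ d i = LinearMap.id) {f : B}
    {rs : List B} (hrs : IsWeaklyRegular B rs) (hrsN : N ≤ rs.length)
    (hrs_null : ∀ r ∈ rs, ∃ b, IsNullHomotopicSMul d (r - b * f))
    (L : Type*) [CommRing L] [Algebra B L] [IsLocalization (Submonoid.powers f) L]
    {gs : List B} (hgs : IsWeaklyRegular L gs) (hgsN : N ≤ gs.length)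
    (hgs_null : ∀ g ∈ gs, IsNullHomotopicSMul d g) (i : ℕ) :
    Function.Exact (d (i + 1)) (d i) := by
  rw [LinearMap.exact_iff]
  refine le_antisymm (fun z hz ↦ ?_) (LinearMap.range_le_ker_iff.mpr (hd i))
  rw [LinearMap.mem_ker] at hz
  have hcone := isConeExactAt_lTensor_of_isWeaklyRegular hd hN rs hrs_null B hrs i (by omega)
  have hdiv (x : K (i + 1)) (hx : d i x = 0) (hfx : f • x ∈ LinearMap.range (d (i + 1))) :
      x ∈ LinearMap.range (d (i + 1)) := by
    obtain ⟨y, hy⟩ := hfx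
    obtain ⟨-, y', -, h⟩ := hcone ((1 : B) ⊗ₜ (-y)) ((1 : B) ⊗ₜ x)
      (by rw [LinearMap.lTensor_tmul, map_neg, hy]; simp [TensorProduct.tmul_neg])
      (by simp [hx])
    refine ⟨-TensorProduct.lid B _ y', ?_⟩
    have := congrArg (TensorProduct.lid B _) h
    simp only [map_neg, TensorProduct.lid_tmul, one_smul] at this ⊢
    rw [← this]
    clear h this
    congr 1
    induction y' with
    | zero => simp
    | add x y hx hy => simp only [map_add, hx, hy]
    | tmul b k => simp
  have hpow (p : ℕ) (hp : f ^ p • z ∈ LinearMap.range (d (i + 1))) :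
      z ∈ LinearMap.range (d (i + 1)) := by
    induction p with
    | zero => simpa using hp
    | succ p ih =>
      exact ih (hdiv _ (by rw [map_smul, hz, smul_zero]) (by rwa [smul_smul, ← pow_succ']))
  have hloc := isConeExactAt_lTensor_of_isWeaklyRegular (f := 0) hd hN gs
    (fun g hg ↦ ⟨0, by simpa using hgs_null g hg⟩) L hgs i (by omega)
  obtain ⟨-, w, -, hw⟩ := hloc 0 ((1 : L) ⊗ₜ z) (by simp) (by simp [hz])
  have hK (j : ℕ) : IsLocalizedModule (Submonoid.powers f) (TensorProduct.mk B L (K j) 1) :=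
    (isLocalizedModule_iff_isBaseChange _ L _).mpr (TensorProduct.isBaseChange B (K j) L)
  obtain ⟨⟨y, s⟩, hy⟩ := IsLocalizedModule.surj (Submonoid.powers f)
    (TensorProduct.mk B L (K (i + 2)) 1) (-w)
  have h : TensorProduct.mk B L (K (i + 1)) 1 (s.1 • z) =
      TensorProduct.mk B L (K (i + 1)) 1 (d (i + 1) y) := by
    have := congrArg ((d (i + 1)).lTensor L) hy
    simp only [Submonoid.smul_def, map_smul, map_neg, hw, TensorProduct.mk_apply,
      LinearMap.lTensor_tmul] at this ⊢
    exact this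
  obtain ⟨c, hc⟩ := (IsLocalizedModule.eq_iff_exists (Submonoid.powers f) _).mp h
  obtain ⟨p, hp⟩ := (c * s).2
  refine hpow p ⟨c.1 • y, ?_⟩
  simp only [Submonoid.smul_def] at hc
  rw [map_smul, ← hc, smul_smul, ← Submonoid.coe_mul, ← hp]

end AlgebraicComplex

section BaseChange

variable {Q B : Type} [CommRing Q] [CommRing B] [Algebra Q B] {Y : ModuleCat.{0} Q}
  (P : ProjectiveResolution Y)

/-- The differential of the base change to `B` of a projective resolution. -/
noncomputable abbrev CategoryTheory.ProjectiveResolution.baseChangeD (B : Type) [CommRing B]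
    [Algebra Q B] (i : ℕ) : B ⊗[Q] P.complex.X (i + 1) →ₗ[B] B ⊗[Q] P.complex.X i :=
  (P.complex.d (i + 1) i).hom.baseChange B

lemma CategoryTheory.ProjectiveResolution.isNullHomotopicSMul_baseChangeD {a : Q}
    (ha : ∀ y : Y, a • y = 0) :
    IsNullHomotopicSMul (K := fun i ↦ B ⊗[Q] P.complex.X i) (P.baseChangeD B)
      (algebraMap Q B a) := by
  obtain ⟨h, hh⟩ := P.exists_homotopy_smul ha
  refine ⟨fun i ↦ (h i).baseChange B, fun i x ↦ ?_⟩
  have := congr($(congrArg (LinearMap.baseChange B) (hh i)) x)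
  rw [LinearMap.baseChange_add, LinearMap.baseChange_comp, LinearMap.baseChange_comp,
    LinearMap.baseChange_smul, LinearMap.baseChange_id] at this
  rw [algebraMap_smul]
  exact this

/-- If `Y` is annihilated by `ss` and has projective dimension at most `N`, then its positive `Tor`
with `B` vanishes as soon as `ss` is weakly regular on the localization of `B` away from `f`, and
`B` carries a weakly regular sequence whose members are, modulo `f`, zero or negatives of `ss`. -/
lemma isZero_Tor_succ_of_isWeaklyRegular (N : ℕ) [HasProjectiveDimensionLT Y (N + 1)]
    {ss : List Q} (hss : ∀ s ∈ ss, ∀ y : Y, s • y = 0) (hssN : N ≤ ss.length) {f : B}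
    {rs : List B} (hrs : IsWeaklyRegular B rs) (hrsN : N ≤ rs.length)
    (hrs_mem : ∀ r ∈ rs, ∃ b, r - b * f = 0 ∨ ∃ s ∈ ss, r - b * f = -algebraMap Q B s)
    (L : Type*) [CommRing L] [Algebra B L] [IsLocalization (Submonoid.powers f) L]
    (hL : IsWeaklyRegular L (ss.map (algebraMap Q B))) (i : ℕ) :
    IsZero (((Tor (ModuleCat Q) (i + 1)).obj (ModuleCat.of Q B)).obj Y) := by
  let P := projectiveResolution Y
  have hproj (j : ℕ) : Module.Projective Q (P.complex.X j) :=
    (IsProjective.iff_projective _).mpr (P.projective j)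
  have hnull (s : Q) (hs : s ∈ ss) := P.isNullHomotopicSMul_baseChangeD (B := B) (hss s hs)
  refine P.isZero_Tor_succ B i ?_
  refine exact_of_isWeaklyRegular_of_isLocalization (K := fun i ↦ B ⊗[Q] P.complex.X i)
    (d := P.baseChangeD B) (N := N) (f := f) (fun j ↦ ?_) (fun j hj ↦ ?_) hrs hrsN
    (fun r hr ↦ ?_) L hL (by simpa using hssN) (fun g hg ↦ ?_) i
  · rw [← LinearMap.baseChange_comp, ← ModuleCat.hom_comp, P.complex.d_comp_d]
    exact LinearMap.baseChange_zero
  · obtain ⟨t, u, h⟩ := P.exists_contraction hj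
    refine ⟨t.baseChange B, u.baseChange B, ?_⟩
    rw [← LinearMap.baseChange_comp, ← LinearMap.baseChange_comp, ← LinearMap.baseChange_add, h,
      LinearMap.baseChange_id]
  · obtain ⟨b, h | ⟨s, hs, h⟩⟩ := hrs_mem r hr
    · exact ⟨b, h ▸ .zero⟩
    · exact ⟨b, h ▸ (hnull s hs).neg⟩
  · obtain ⟨s, hs, rfl⟩ := List.mem_map.mp hg
    exact hnull s hs

end BaseChange

lemma MvPolynomial.hasProjectiveDimensionLT_quotient_span_X (σ R : Type) [Fintype σ]
    [CommRing R] :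
    HasProjectiveDimensionLT (ModuleCat.of (MvPolynomial σ R)
      (MvPolynomial σ R ⧸ Ideal.span (Set.range (X : σ → MvPolynomial σ R))))
      (Fintype.card σ + 1) := by
  have hQ : HasProjectiveDimensionLT
      (ModuleCat.of (MvPolynomial σ R) (MvPolynomial σ R)) 1 := by
    have := (IsProjective.iff_projective (R := MvPolynomial σ R)
      (MvPolynomial σ R)).mp inferInstance
    infer_instance
  have h := ModuleCat.hasProjectiveDimensionLT_quotient_of_isWeaklyRegular _ _
    (isWeaklyRegular_map_X (R := R) (Finset.univ : Finset σ).nodup_toList) 1 hQ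
  rw [List.length_map, Finset.length_toList, Finset.card_univ, add_comm] at h
  have hspan : Ideal.ofList (Finset.univ.toList.map (X : σ → MvPolynomial σ R)) • ⊤ =
      Ideal.span (Set.range (X : σ → MvPolynomial σ R)) := by
    rw [smul_eq_mul, Ideal.mul_top, Ideal.ofList]
    congr 1
    ext
    simp
  exact hasProjectiveDimensionLT_of_iso (Submodule.quotEquivOfEq _ _ hspan).toModuleIso _

/-- The automorphism of a polynomial ring given by `Xᵣ ↦ u Xᵣ - aᵣ` for a unit `u`. -/
noncomputable def MvPolynomial.affineEquiv {σ R : Type*} [CommRing R] (u : Rˣ) (a : σ → R) :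
    MvPolynomial σ R ≃ₐ[R] MvPolynomial σ R :=
  AlgEquiv.ofAlgHom (aeval fun r ↦ C u.1 * X r - C (a r))
    (aeval fun r ↦ C (u⁻¹).1 * (X r + C (a r)))
    (by
      ext r : 1
      simp only [AlgHom.comp_apply, aeval_X, map_mul, map_add, algHom_C, algebraMap_eq,
        sub_add_cancel, AlgHom.id_apply]
      rw [← mul_assoc, ← C_mul, Units.inv_mul, C_1, one_mul])
    (by
      ext r : 1
      simp only [AlgHom.comp_apply, aeval_X, map_mul, map_sub, algHom_C, algebraMap_eq,
        AlgHom.id_apply]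
      rw [← mul_assoc, ← C_mul, Units.mul_inv, C_1, one_mul, add_sub_cancel_right])

lemma MvPolynomial.isWeaklyRegular_map_mul_X_sub {σ R : Type*} [CommRing R] {l : List σ}
    (hl : l.Nodup) (u : Rˣ) (a : σ → R) :
    IsWeaklyRegular (MvPolynomial σ R) (l.map fun r ↦ C u.1 * X r - C (a r)) := by
  refine (AddEquiv.isWeaklyRegular_congr (e := (affineEquiv u a).toAddEquiv) ?_).mp
    (isWeaklyRegular_map_X hl)
  rw [List.forall₂_map_left_iff, List.forall₂_map_right_iff, List.forall₂_same]
  intro r _ x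
  simp [affineEquiv]

end KoszulRegularity

/-- Let `f₁, …, fₙ` be a regular sequence in a commutative ring `R` and fix `k`.
Let `B = R[Xᵣ : r ≠ k]` and regard `B` as an algebra over `Q = ℤ[Sᵣ : r ≠ k]` via
`Sᵣ ↦ f_k·Xᵣ − fᵣ`.  Then `Torᵢ^Q (B, Q/(Sᵣ : r ≠ k)) = 0` for every `i > 0`; that is,
the sequence `(f_k·Xᵣ − fᵣ)_{r ≠ k}` (the defining relations of the `k`-th chart of the
blow-up of `Spec R` in `V(f₁,…,fₙ)`) is Koszul-regular in `B`. -/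
theorem tor_eq_zero_blowup_chart_relations (R : Type) [CommRing R] (n : ℕ)
    (f : Fin n → R) (hf : RingTheory.Sequence.IsRegular R (List.ofFn f)) (k : Fin n)
    (i : ℕ) (hi : 0 < i) :
    letI : Algebra (MvPolynomial {r : Fin n // r ≠ k} ℤ)
        (MvPolynomial {r : Fin n // r ≠ k} R) :=
      (MvPolynomial.aeval fun r : {r : Fin n // r ≠ k} =>
        (C (f k) * X r - C (f r.1) : MvPolynomial {r : Fin n // r ≠ k} R)).toRingHom.toAlgebra
    IsZero (((Tor (ModuleCat (MvPolynomial {r : Fin n // r ≠ k} ℤ)) i).obj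
        (ModuleCat.of (MvPolynomial {r : Fin n // r ≠ k} ℤ)
          (MvPolynomial {r : Fin n // r ≠ k} R))).obj
      (ModuleCat.of (MvPolynomial {r : Fin n // r ≠ k} ℤ)
        (MvPolynomial {r : Fin n // r ≠ k} ℤ ⧸
          Ideal.span (Set.range
            (X : {r : Fin n // r ≠ k} → MvPolynomial {r : Fin n // r ≠ k} ℤ))))) := by
  let : Algebra (MvPolynomial {r : Fin n // r ≠ k} ℤ) (MvPolynomial {r : Fin n // r ≠ k} R) :=
    (MvPolynomial.aeval fun r : {r : Fin n // r ≠ k} =>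
      (C (f k) * X r - C (f r.1) : MvPolynomial {r : Fin n // r ≠ k} R)).toRingHom.toAlgebra
  have hX (r : {r : Fin n // r ≠ k}) : algebraMap (MvPolynomial {r : Fin n // r ≠ k} ℤ)
      (MvPolynomial {r : Fin n // r ≠ k} R) (X r) = C (f k) * X r - C (f r.1) :=
    MvPolynomial.aeval_X _ r
  obtain ⟨j, rfl⟩ := Nat.exists_eq_add_of_lt hi
  rw [zero_add]
  have := MvPolynomial.hasProjectiveDimensionLT_quotient_span_X {r : Fin n // r ≠ k} ℤ
  let : Algebra (MvPolynomial {r : Fin n // r ≠ k} R)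
      (MvPolynomial {r : Fin n // r ≠ k} (Localization.Away (f k))) :=
    MvPolynomial.algebraMvPolynomial
  have hloc : IsLocalization (Submonoid.powers (C (f k) : MvPolynomial {r : Fin n // r ≠ k} R))
      (MvPolynomial {r : Fin n // r ≠ k} (Localization.Away (f k))) := by
    have := MvPolynomial.isLocalization (σ := {r : Fin n // r ≠ k}) (Submonoid.powers (f k))
      (Localization.Away (f k))
    rwa [Submonoid.map_powers] at this
  refine isZero_Tor_succ_of_isWeaklyRegular (f := (C (f k) : MvPolynomial {r : Fin n // r ≠ k} R))
    (Fintype.card {r : Fin n // r ≠ k})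
    (ss := Finset.univ.toList.map X) ?_ (by simp)
    (hf.toIsWeaklyRegular.of_flat (S := MvPolynomial {r : Fin n // r ≠ k} R)) ?_ ?_
    (MvPolynomial {r : Fin n // r ≠ k} (Localization.Away (f k))) ?_ j
  · intro s hs y
    obtain ⟨r, -, rfl⟩ := List.mem_map.mp hs
    obtain ⟨y, rfl⟩ := Ideal.Quotient.mk_surjective y
    exact Ideal.Quotient.eq_zero_iff_mem.mpr
      (Ideal.mul_mem_right _ _ (Ideal.subset_span ⟨r, rfl⟩))
  · simp
  · intro r hr
    simp only [List.mem_map, List.mem_ofFn] at hr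
    obtain ⟨-, ⟨l, rfl⟩, rfl⟩ := hr
    by_cases hl : l = k
    · exact ⟨1, .inl (by simp [hl, algebraMap_eq])⟩
    · refine ⟨X ⟨l, hl⟩, .inr ⟨X ⟨l, hl⟩, by simp, ?_⟩⟩
      rw [hX, algebraMap_eq]
      ring
  · rw [← RingTheory.Sequence.isWeaklyRegular_map_algebraMap_iff
      (MvPolynomial {r : Fin n // r ≠ k} (Localization.Away (f k)))]
    have hunit := IsLocalization.Away.algebraMap_isUnit (S := Localization.Away (f k)) (f k)
    have hmap (r : {r : Fin n // r ≠ k}) :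
        algebraMap _ (MvPolynomial {r : Fin n // r ≠ k} (Localization.Away (f k)))
          (algebraMap _ (MvPolynomial {r : Fin n // r ≠ k} R)
            (X r : MvPolynomial {r : Fin n // r ≠ k} ℤ)) =
          C hunit.unit.1 * X r - C (algebraMap R (Localization.Away (f k)) (f r.1)) := by
      rw [hX]
      change MvPolynomial.map (algebraMap R (Localization.Away (f k))) _ = _
      simp only [map_sub, map_mul, map_C, map_X, IsUnit.unit_spec]
    rw [List.map_map, List.map_map, List.map_congr_left fun r _ ↦ by exact hmap r]
    exact MvPolynomial.isWeaklyRegular_map_mul_X_sub (Finset.nodup_toList _) _ _
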